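/- If β > 2, then equation (γ) does not have a large solution: there is no u ∈ C²(Ω) with −Δu + (γ(δ)/δ²)u + e^u = 0 in Ω and u(x) → ∞ as δ(x) → 0. -/

import Mathlib

/-!
A solution that blows up at the boundary is nonnegative near it, hence satisfies `Δu ≥ e^u` there,
and the Keller–Osserman estimate (`exp_le_of_exp_le_lap`) gives `u ≤ 2 log(1/δ) + C`. On the other
hand `u` is a subsolution of `-Δw + (γ(δ)/δ²) w = 0`. With `ℓ = log(1/δ)` the potential is
`β/(2ℓδ²)`, and for `β > 2` this equation has supersolutions near the boundary growing like
`ℓ log ℓ`, faster than the bound on `u` (`bar_laplacian_le`, `log_growth`). Comparing `u` with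
`K + ε · bar(δ)`, where `K ≥ 0` bounds `u` away from the boundary (nonnegative constants are
supersolutions as well), and letting `ε → 0` gives `u ≤ K` throughout `Ω`, so `u` is not large.

The Laplacian of `δ` is not used in the comparison. Differentiability of `δ` in the strip yields the
interior ball condition (`exists_interior_ball`): `δ(z) ≥ ρ - |z - y|` with equality at a prescribed
point `x`. Hence at a maximum of `u - ε · bar(δ)` the function `u` is touched from above by a smooth
radial function centred at `y`, and the second derivative test applies (`lap_le_of_radial_touch`,
`no_interior_max`). This touching argument needs only a lower bound on `δ`, which matters because
`Δδ` may be unbounded above near the boundary, as for a punctured ball near its puncture.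
-/

open MeasureTheory Real Filter Topology Set

noncomputable section

abbrev Euc (N : ℕ) := EuclideanSpace ℝ (Fin N)

/-- Distance of `x` to the boundary of `Ω` (distance to the complement). -/
def bdist {N : ℕ} (Ω : Set (Euc N)) (x : Euc N) : ℝ := Metric.infDist x Ωᶜ

/-- The strip `Ω_ρ = {x ∈ Ω : δ(x) < ρ}`. -/
def bstrip {N : ℕ} (Ω : Set (Euc N)) (ρ : ℝ) : Set (Euc N) := {x ∈ Ω | bdist Ω x < ρ}

/-- `C³`-regularity of the boundary, expressed through the regularity of the
distance function in a strip near the boundary. -/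
def BoundaryC3 {N : ℕ} (Ω : Set (Euc N)) : Prop :=
  ∃ ρ > 0, ContDiffOn ℝ 3 (bdist Ω) (bstrip Ω ρ)

/-- The Laplacian of `u`. -/
def lap {N : ℕ} (u : Euc N → ℝ) (x : Euc N) : ℝ :=
  ∑ i : Fin N, fderiv ℝ (fun y => fderiv ℝ u y (EuclideanSpace.single i 1)) x
    (EuclideanSpace.single i 1)

/-- A classical solution of `−Δu − (μ/δ²)u + e^u = 0` in `Ω`. -/
def IsSolution {N : ℕ} (μ : ℝ) (Ω : Set (Euc N)) (u : Euc N → ℝ) : Prop :=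
  ContDiffOn ℝ 2 u Ω ∧
  ∀ x ∈ Ω, -lap u x - (μ / (bdist Ω x) ^ 2) * u x + Real.exp (u x) = 0

/-- A large solution: `u(x) → ∞` as `δ(x) → 0`. -/
def IsLarge {N : ℕ} (Ω : Set (Euc N)) (u : Euc N → ℝ) : Prop :=
  ∀ M : ℝ, ∃ ε > 0, ∀ x ∈ Ω, bdist Ω x < ε → M ≤ u x

/-- The borderline potential weight `γ(s) = β·min{ (log(1/s²))⁻¹, 1 }`. -/
def gammaFun (β s : ℝ) : ℝ := β * min (Real.log (s ^ 2)⁻¹)⁻¹ 1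

/-- A classical solution of equation (γ): `−Δu + (γ(δ)/δ²)u + e^u = 0` in `Ω`. -/
def IsGammaSolution {N : ℕ} (β : ℝ) (Ω : Set (Euc N)) (u : Euc N → ℝ) : Prop :=
  ContDiffOn ℝ 2 u Ω ∧
  ∀ x ∈ Ω, -lap u x + (gammaFun β (bdist Ω x) / (bdist Ω x) ^ 2) * u x
      + Real.exp (u x) = 0

/-! ### Touching by radial functions -/

/-- Second derivative test: if `c > 0` the critical point `0` would also be a local minimum, so `g`
would be locally constant and `c = 0`. -/
theorem second_deriv_nonpos {g g' : ℝ → ℝ} {c : ℝ} (hmax : IsLocalMax g 0)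
    (hg : ∀ᶠ t in 𝓝 (0 : ℝ), HasDerivAt g (g' t) t) (hg' : HasDerivAt g' c 0) : c ≤ 0 := by
  by_contra! hc
  have hd : deriv g =ᶠ[𝓝 0] g' := hg.mono fun t ht => ht.deriv
  have h2 : deriv (deriv g) 0 = c := (hg'.congr_of_eventuallyEq hd).deriv
  have hmin : IsLocalMin g 0 := isLocalMin_of_deriv_deriv_pos (by rw [h2]; exact hc)
    hmax.deriv_eq_zero hg.self_of_nhds.continuousAt
  have hconst : g =ᶠ[𝓝 0] fun _ => g 0 := by
    filter_upwards [hmax, hmin] with t h1 h2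
    exact le_antisymm h1 h2
  have h3 : deriv (deriv g) 0 = 0 := by
    have h4 : deriv g =ᶠ[𝓝 0] fun _ => 0 := by
      refine hconst.deriv.trans (Eventually.of_forall fun t => ?_)
      simp
    rw [h4.deriv_eq]; simp
  linarith

/-- First and second derivatives of a `C²` function along the line `x + t e`. -/
theorem hasDerivAt_line_snd {N : ℕ} {u : Euc N → ℝ} {x : Euc N} (hu : ContDiffAt ℝ 2 u x)
    (e : Euc N) :
    (∀ᶠ t in 𝓝 (0 : ℝ), HasDerivAt (fun t : ℝ => u (x + t • e)) (fderiv ℝ u (x + t • e) e) t) ∧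
    HasDerivAt (fun t : ℝ => fderiv ℝ u (x + t • e) e)
      (fderiv ℝ (fun y => fderiv ℝ u y e) x e) 0 := by
  have hline : ∀ t : ℝ, HasDerivAt (fun t : ℝ => x + t • e) e t := fun t => by
    simpa using ((hasDerivAt_id t).smul_const e).const_add x
  have hcont : Tendsto (fun t : ℝ => x + t • e) (𝓝 0) (𝓝 x) := by
    have := (hline 0).continuousAt.tendsto
    simpa using this
  constructor
  · have h1 : ∀ᶠ y in 𝓝 x, DifferentiableAt ℝ u y :=
      (hu.eventually (by simp)).mono fun y hy => hy.differentiableAt (by simp)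
    filter_upwards [hcont.eventually h1] with t ht
    exact ht.hasFDerivAt.comp_hasDerivAt t (hline t)
  · have h2 : DifferentiableAt ℝ (fderiv ℝ u) x :=
      (hu.fderiv_right (m := 1) (by norm_num)).differentiableAt (by simp)
    have h3 : DifferentiableAt ℝ (fun y => fderiv ℝ u y e) x := h2.clm_apply (by fun_prop)
    have h4 : HasFDerivAt (fun y => fderiv ℝ u y e) (fderiv ℝ (fun y => fderiv ℝ u y e) x)
        (x + (0 : ℝ) • e) := by simpa using h3.hasFDerivAt
    exact h4.comp_hasDerivAt (0 : ℝ) (hline 0)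

/-- If `u` is touched from above at `x` (up to a constant) by the radial function
`z ↦ F(|z - y|²)`, then `Δu(x)` is at most the Laplacian `4sF''(s) + 2NF'(s)`, `s = |x - y|²`, of
that function. The variable `s = |z - y|²` makes the restriction to each coordinate line
`F(s + 2at + t²)`, with no square root. -/
theorem lap_le_of_radial_touch {N : ℕ} {u : Euc N → ℝ} {x y : Euc N} {F F' : ℝ → ℝ} {c : ℝ}
    (hu : ContDiffAt ℝ 2 u x)
    (hmax : IsLocalMax (fun z => u z - F (‖z - y‖ ^ 2)) x)
    (hF : ∀ᶠ s in 𝓝 (‖x - y‖ ^ 2), HasDerivAt F (F' s) s)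
    (hF' : HasDerivAt F' c (‖x - y‖ ^ 2)) :
    lap u x ≤ 4 * ‖x - y‖ ^ 2 * c + 2 * N * F' (‖x - y‖ ^ 2) := by
  set s := ‖x - y‖ ^ 2 with hs
  have key : ∀ i : Fin N,
      fderiv ℝ (fun z => fderiv ℝ u z (EuclideanSpace.single i 1)) x (EuclideanSpace.single i 1)
        ≤ 4 * (x i - y i) ^ 2 * c + 2 * F' s := by
    intro i
    set e : Euc N := EuclideanSpace.single i 1 with he
    set a := x i - y i with ha
    obtain ⟨h1, h2⟩ := hasDerivAt_line_snd hu e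
    have hnorm : ∀ t : ℝ, ‖x + t • e - y‖ ^ 2 = s + 2 * a * t + t ^ 2 := by
      intro t
      have : x + t • e - y = (x - y) + t • e := by abel
      rw [this, norm_add_sq_real, norm_smul, inner_smul_right]
      simp [he, hs, ha, EuclideanSpace.inner_single_right]
      ring
    have hp : ∀ t : ℝ, HasDerivAt (fun t : ℝ => s + 2 * a * t + t ^ 2) (2 * a + 2 * t) t := by
      intro t
      have := (((hasDerivAt_id' t).const_mul (2 * a)).const_add s).add (hasDerivAt_pow 2 t)
      exact this.congr_deriv (by simp)
    have hp0 : Tendsto (fun t : ℝ => s + 2 * a * t + t ^ 2) (𝓝 0) (𝓝 s) := by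
      simpa using (hp 0).continuousAt.tendsto
    have hline : Tendsto (fun t : ℝ => x + t • e) (𝓝 0) (𝓝 x) := by
      have : Continuous fun t : ℝ => x + t • e := by fun_prop
      simpa using this.tendsto 0
    have hloc : IsLocalMax (fun t : ℝ => u (x + t • e) - F (s + 2 * a * t + t ^ 2)) 0 := by
      filter_upwards [hline.eventually hmax] with t ht
      rw [hnorm] at ht
      simpa using ht
    have hder : ∀ᶠ t in 𝓝 (0 : ℝ),
        HasDerivAt (fun t : ℝ => u (x + t • e) - F (s + 2 * a * t + t ^ 2))
          (fderiv ℝ u (x + t • e) e - F' (s + 2 * a * t + t ^ 2) * (2 * a + 2 * t)) t := by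
      filter_upwards [h1, hp0.eventually hF] with t ht1 ht2
      exact ht1.sub (ht2.comp t (hp t))
    have hF0 : HasDerivAt F' c (s + 2 * a * 0 + 0 ^ 2) := by simpa using hF'
    have hlin : HasDerivAt (fun t : ℝ => 2 * a + 2 * t) 2 0 := by
      simpa using ((hasDerivAt_id (0 : ℝ)).const_mul 2).const_add (2 * a)
    have hder2 := h2.sub ((hF0.comp (0 : ℝ) (hp 0)).mul hlin)
    have := second_deriv_nonpos hloc hder hder2
    simp only [Function.comp] at this
    norm_num at this
    nlinarith [this]
  have hsum : ∑ i : Fin N, (x i - y i) ^ 2 = s := by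
    rw [hs, EuclideanSpace.norm_sq_eq]
    simp
  calc lap u x ≤ ∑ i : Fin N, (4 * (x i - y i) ^ 2 * c + 2 * F' s) :=
        Finset.sum_le_sum fun i _ => key i
    _ = 4 * s * c + 2 * N * F' s := by
        rw [Finset.sum_add_distrib, ← Finset.sum_mul, ← Finset.mul_sum, hsum]
        simp
        ring

/-! ### Geometry of the distance function -/

theorem compl_nonempty_of_bounded {N : ℕ} (hN : 2 ≤ N) {Ω : Set (Euc N)}
    (hΩb : Bornology.IsBounded Ω) : Ωᶜ.Nonempty := by
  rw [Set.nonempty_compl]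
  rintro rfl
  have : Nonempty (Fin N) := ⟨⟨0, by omega⟩⟩
  exact NormedSpace.unbounded_univ ℝ (Euc N) hΩb

theorem bdist_continuous {N : ℕ} (Ω : Set (Euc N)) : Continuous (bdist Ω) :=
  Metric.continuous_infDist_pt _

theorem bdist_le_add {N : ℕ} (Ω : Set (Euc N)) (x y : Euc N) :
    bdist Ω x ≤ bdist Ω y + ‖x - y‖ := by
  rw [← dist_eq_norm]; exact Metric.infDist_le_infDist_add_dist

theorem mem_of_bdist_pos {N : ℕ} {Ω : Set (Euc N)} {x : Euc N} (h : 0 < bdist Ω x) : x ∈ Ω := by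
  by_contra hx
  have : bdist Ω x = 0 := Metric.infDist_zero_of_mem hx
  linarith

theorem exists_foot {N : ℕ} {Ω : Set (Euc N)} (hΩo : IsOpen Ω) (hne : Ωᶜ.Nonempty) (x : Euc N) :
    ∃ p ∈ Ωᶜ, bdist Ω x = ‖x - p‖ := by
  obtain ⟨p, hp, h⟩ := hΩo.isClosed_compl.exists_infDist_eq_dist hne x
  exact ⟨p, hp, by rw [← dist_eq_norm]; exact h⟩

theorem bdist_pos {N : ℕ} {Ω : Set (Euc N)} (hΩo : IsOpen Ω) (hne : Ωᶜ.Nonempty) {x : Euc N}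
    (hx : x ∈ Ω) : 0 < bdist Ω x :=
  (hΩo.isClosed_compl.notMem_iff_infDist_pos hne).1 (by simpa using hx)

/-- One step of steepest ascent for the distance. Moving from `z` towards its foot point decreases
`δ` at unit rate, so differentiability forces it to increase at rate at least `1` in the opposite
direction. -/
theorem exists_climb {N : ℕ} {Ω : Set (Euc N)} (hΩo : IsOpen Ω) (hne : Ωᶜ.Nonempty) {z : Euc N}
    (hz : z ∈ Ω) (hd : DifferentiableAt ℝ (bdist Ω) z) {η : ℝ} (hη : 0 < η) :
    ∀ᶠ h in 𝓝[>] (0 : ℝ), ∃ w, ‖w - z‖ ≤ h ∧ bdist Ω z + (1 - η) * h ≤ bdist Ω w := by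
  obtain ⟨p, hp, hpd⟩ := exists_foot hΩo hne z
  have hpos := bdist_pos hΩo hne hz
  set d := bdist Ω z with hdd
  set v : Euc N := d⁻¹ • (z - p) with hv
  have hvn : ‖v‖ = 1 := by
    rw [hv, norm_smul, ← hpd, norm_inv, Real.norm_of_nonneg hpos.le]
    exact inv_mul_cancel₀ hpos.ne'
  have hzp : z - p = d • v := by rw [hv, smul_smul, mul_inv_cancel₀ hpos.ne', one_smul]
  have hline : ∀ t : ℝ, HasDerivAt (fun t : ℝ => z + t • v) v t := fun t => by
    simpa using ((hasDerivAt_id t).smul_const v).const_add z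
  have hd0 : HasFDerivAt (bdist Ω) (fderiv ℝ (bdist Ω) z) (z + (0 : ℝ) • v) := by
    simpa using hd.hasFDerivAt
  have hg := hd0.comp_hasDerivAt (0 : ℝ) (hline 0)
  set m := fderiv ℝ (bdist Ω) z v with hm
  have hslope := hasDerivAt_iff_tendsto_slope.1 hg
  -- Difference quotients from the left: `z + t v` with `t < 0` lies between `z` and its foot `p`.
  have hm1 : 1 ≤ m := by
    have hleft : Tendsto (slope (bdist Ω ∘ fun t : ℝ => z + t • v) 0) (𝓝[<] 0) (𝓝 m) :=
      hslope.mono_left (nhdsWithin_mono _ fun t ht => ne_of_lt ht)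
    refine ge_of_tendsto hleft ?_
    have : Ioo (-d) 0 ∈ 𝓝[<] (0 : ℝ) := Ioo_mem_nhdsLT (by linarith)
    filter_upwards [this] with t ht
    have hle : bdist Ω (z + t • v) ≤ d + t := by
      have h1 : bdist Ω (z + t • v) ≤ dist (z + t • v) p := Metric.infDist_le_dist_of_mem hp
      have h2 : z + t • v - p = (d + t) • v := by
        rw [add_smul, ← hzp]; abel
      rw [dist_eq_norm, h2, norm_smul, hvn, mul_one, Real.norm_of_nonneg (by linarith [ht.1])] at h1
      exact h1
    rw [slope_def_field]
    simp only [Function.comp, zero_smul, add_zero, sub_zero]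
    rw [le_div_iff_of_neg ht.2]
    rw [← hdd]; linarith
  have hright : Tendsto (slope (bdist Ω ∘ fun t : ℝ => z + t • v) 0) (𝓝[>] 0) (𝓝 m) :=
    hslope.mono_left (nhdsWithin_mono _ fun t ht => ne_of_gt ht)
  filter_upwards [hright.eventually (lt_mem_nhds (show 1 - η < m by linarith)),
    self_mem_nhdsWithin] with h hh hh0
  have hh0 : 0 < h := hh0
  refine ⟨z + h • v, ?_, ?_⟩
  · simp [norm_smul, hvn, abs_of_pos hh0]
  · rw [slope_def_field] at hh
    simp only [Function.comp, zero_smul, add_zero, sub_zero] at hh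
    rw [lt_div_iff₀ hh0, ← hdd] at hh
    linarith

/-- Interior ball condition: for `δ(x) ≤ ρ` there is a ball of radius `ρ` inside `Ω` whose centre
`y` satisfies `|x - y| = ρ - δ(x)`. Continuous induction on `exists_climb` gives, for each `η > 0`,
a point within distance `τ = ρ - δ(x)` of `x` where `δ ≥ δ(x) + (1 - η)τ`; a maximiser of `δ` over
the closed ball of radius `τ` then has `δ ≥ ρ`. -/
theorem exists_interior_ball {N : ℕ} {Ω : Set (Euc N)} (hΩo : IsOpen Ω) (hne : Ωᶜ.Nonempty)
    {ρ : ℝ} (hreg : ContDiffOn ℝ 3 (bdist Ω) (bstrip Ω ρ)) {x : Euc N} (hx : x ∈ Ω)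
    (hxρ : bdist Ω x ≤ ρ) :
    ∃ y, ‖x - y‖ = ρ - bdist Ω x ∧ ρ ≤ bdist Ω y := by
  set τ := ρ - bdist Ω x with hτ
  have hτ0 : 0 ≤ τ := by linarith
  have hxpos := bdist_pos hΩo hne hx
  have hopen : IsOpen (bstrip Ω ρ) :=
    hΩo.inter (isOpen_lt (bdist_continuous Ω) continuous_const)
  have hdiff : ∀ z ∈ bstrip Ω ρ, DifferentiableAt ℝ (bdist Ω) z := fun z hz =>
    (hreg.differentiableOn (by simp) z hz).differentiableAt (hopen.mem_nhds hz)
  have main : ∀ η : ℝ, 0 < η → η < 1 →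
      ∃ z, ‖z - x‖ ≤ τ ∧ bdist Ω x + (1 - η) * τ ≤ bdist Ω z := by
    intro η hη hη1
    set B := {q : ℝ × Euc N | ‖q.2 - x‖ ≤ q.1 ∧ bdist Ω x + (1 - η) * q.1 ≤ bdist Ω q.2} with hB
    set T := {t : ℝ | ∃ z, ‖z - x‖ ≤ t ∧ bdist Ω x + (1 - η) * t ≤ bdist Ω z} with hT
    have hBcl : IsClosed B := by
      have c1 : Continuous fun q : ℝ × Euc N => ‖q.2 - x‖ := by fun_prop
      have c2 : Continuous fun q : ℝ × Euc N => bdist Ω x + (1 - η) * q.1 := by fun_prop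
      exact (isClosed_le c1 continuous_fst).inter
        (isClosed_le c2 ((bdist_continuous Ω).comp continuous_snd))
    have hTeq : T ∩ Icc 0 τ = Prod.fst '' (B ∩ (Icc 0 τ ×ˢ Metric.closedBall x τ)) := by
      ext t
      constructor
      · rintro ⟨⟨z, hz1, hz2⟩, ht⟩
        refine ⟨(t, z), ⟨⟨hz1, hz2⟩, ht, ?_⟩, rfl⟩
        rw [Metric.mem_closedBall, dist_eq_norm]
        exact hz1.trans ht.2
      · rintro ⟨⟨t', z⟩, ⟨⟨hz1, hz2⟩, ht, -⟩, rfl⟩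
        exact ⟨⟨z, hz1, hz2⟩, ht⟩
    -- `T` is closed as the projection of a compact set of pairs `(t, z)`.
    have hTcl : IsClosed (T ∩ Icc 0 τ) := by
      rw [hTeq]
      refine IsCompact.isClosed (IsCompact.image ?_ continuous_fst)
      exact (isCompact_Icc.prod (isCompact_closedBall x τ)).inter_left hBcl
    refine hTcl.mem_of_ge_of_forall_exists_gt (a := 0) (b := τ) ⟨x, by simp, by simp⟩ hτ0 ?_
    rintro t ⟨⟨z, hz1, hz2⟩, ht0, htτ⟩
    have hzρ : bdist Ω z < ρ := by
      have := bdist_le_add Ω z x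
      linarith
    have hzpos : 0 < bdist Ω z := by
      have : 0 ≤ (1 - η) * t := mul_nonneg (by linarith) ht0
      linarith
    have hzΩ := mem_of_bdist_pos hzpos
    have h1 := exists_climb hΩo hne hzΩ (hdiff z ⟨hzΩ, hzρ⟩) hη
    have h2 : Ioo (0 : ℝ) (τ - t) ∈ 𝓝[>] (0 : ℝ) := Ioo_mem_nhdsGT (by linarith)
    obtain ⟨h, ⟨w, hw1, hw2⟩, hh⟩ := (h1.and h2).exists
    refine ⟨t + h, ⟨w, ?_, by linarith⟩, by linarith [hh.1], by linarith [hh.2]⟩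
    calc ‖w - x‖ = ‖(w - z) + (z - x)‖ := by congr 1; abel
      _ ≤ ‖w - z‖ + ‖z - x‖ := norm_add_le _ _
      _ ≤ t + h := by linarith
  obtain ⟨y, hy, hymax⟩ := (isCompact_closedBall x τ).exists_isMaxOn
    ⟨x, Metric.mem_closedBall_self hτ0⟩ (bdist_continuous Ω).continuousOn
  rw [Metric.mem_closedBall, dist_eq_norm] at hy
  have hle : ρ ≤ bdist Ω y := by
    have hlim : Tendsto (fun η : ℝ => bdist Ω x + (1 - η) * τ) (𝓝[>] 0) (𝓝 ρ) := by
      have : Continuous fun η : ℝ => bdist Ω x + (1 - η) * τ := by fun_prop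
      have h := this.tendsto 0
      have e : bdist Ω x + (1 - 0) * τ = ρ := by rw [hτ]; ring
      rw [e] at h
      exact h.mono_left nhdsWithin_le_nhds
    refine le_of_tendsto hlim ?_
    filter_upwards [Ioo_mem_nhdsGT (show (0 : ℝ) < 1 by norm_num)] with η hη
    obtain ⟨z, hz1, hz2⟩ := main η hη.1 hη.2
    exact hz2.trans (hymax (by rwa [Metric.mem_closedBall, dist_eq_norm]))
  refine ⟨y, le_antisymm (by rwa [norm_sub_rev]) ?_, hle⟩
  have := bdist_le_add Ω y x
  rw [norm_sub_rev] at this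
  linarith

theorem exists_small_bdist {N : ℕ} {Ω : Set (Euc N)} (hΩo : IsOpen Ω) (hne : Ωᶜ.Nonempty)
    (hΩne : Ω.Nonempty) {ε : ℝ} (hε : 0 < ε) : ∃ x ∈ Ω, bdist Ω x < ε := by
  obtain ⟨x, hx⟩ := hΩne
  obtain ⟨p, hp, hpd⟩ := exists_foot hΩo hne x
  have hpos := bdist_pos hΩo hne hx
  set d := bdist Ω x
  obtain ⟨t, ht0, ht⟩ := exists_between (lt_min zero_lt_one (div_pos hε hpos))
  have ht1 := ht.trans_le (min_le_left _ _)
  have ht2 := ht.trans_le (min_le_right _ _)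
  rw [lt_div_iff₀ hpos] at ht2
  refine ⟨p + t • (x - p), ?_, ?_⟩
  · refine mem_of_bdist_pos ?_
    have h1 := bdist_le_add Ω x (p + t • (x - p))
    have h2 : x - (p + t • (x - p)) = (1 - t) • (x - p) := by module
    rw [h2, norm_smul, ← hpd, Real.norm_of_nonneg (by linarith)] at h1
    nlinarith [mul_pos ht0 hpos]
  · have h1 := bdist_le_add Ω (p + t • (x - p)) p
    have h0 : bdist Ω p = 0 := Metric.infDist_zero_of_mem hp
    rw [h0, zero_add, add_sub_cancel_left, norm_smul, ← hpd, Real.norm_of_nonneg ht0.le] at h1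
    linarith

/-! ### The barrier -/

/-- A collar width `d₀` on which `-log d ≥ 1`, the curvature term `2Nd/ρ` is at most
`η = (β/2 - 1)/2`, and `log(-log d) ≥ (2 + η)/η`. The last bound is what makes
`1 + (1 + η)(log L + 1) ≤ (1 + 2η) log L = (β/2) log L` hold for `L ≥ -log d`. -/
theorem exists_barrier_threshold {N : ℕ} {β ρ : ℝ} (hβ : 2 < β) (hρ : 0 < ρ) :
    ∃ d₀ > 0, d₀ < ρ ∧ d₀ < 1 / 2 ∧ ∀ d, 0 < d → d ≤ d₀ →
      1 ≤ -Real.log d ∧ 2 * N * d / ρ ≤ (β / 2 - 1) / 2 ∧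
      2 + (β / 2 - 1) / 2 ≤ (β / 2 - 1) / 2 * Real.log (-Real.log d) := by
  have hη : 0 < (β / 2 - 1) / 2 := by linarith
  have hlog : Tendsto (fun d : ℝ => -Real.log d) (𝓝[>] 0) atTop :=
    tendsto_neg_atBot_atTop.comp Real.tendsto_log_nhdsGT_zero
  have hloglog := Real.tendsto_log_atTop.comp hlog
  have h3 := (hloglog.const_mul_atTop hη).eventually_ge_atTop (2 + (β / 2 - 1) / 2)
  have h2 : ∀ᶠ d in 𝓝[>] (0 : ℝ), 2 * N * d / ρ < (β / 2 - 1) / 2 := by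
    have hc : Continuous fun d : ℝ => 2 * N * d / ρ := by fun_prop
    have := hc.tendsto 0
    simp only [mul_zero, zero_div] at this
    exact (this.mono_left nhdsWithin_le_nhds).eventually (gt_mem_nhds hη)
  have h1 := hlog.eventually_ge_atTop 1
  have hall := h1.and (h2.and h3)
  obtain ⟨b, hb, hsub⟩ := mem_nhdsGT_iff_exists_Ioc_subset.1 hall
  have hb : 0 < b := hb
  refine ⟨min b (min (ρ / 2) (1 / 4)), by positivity, ?_, ?_, fun d hd0 hd => ?_⟩
  · exact ((min_le_right _ _).trans (min_le_left _ _)).trans_lt (by linarith)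
  · exact ((min_le_right _ _).trans (min_le_right _ _)).trans_lt (by norm_num)
  · obtain ⟨a1, a2, a3⟩ := hsub ⟨hd0, hd.trans (min_le_left _ _)⟩
    exact ⟨a1, a2.le, a3⟩

/-- `L(s) = log(2ρ / (ρ² - s))`. For `s = (ρ - d)²` one has `ρ² - s = d(2ρ - d) ≤ 2ρd`, so
`L ≥ -log d`. -/
def barLog (ρ s : ℝ) : ℝ := Real.log (2 * ρ) - Real.log (ρ ^ 2 - s)

/-- The barrier profile `L log L` in the variable `s`. Evaluated at `s = |z - y|²` it is radial about
the centre `y` of an interior ball of radius `ρ`; at `s = (ρ - δ)²` it is a function of the distance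
`δ`. It dominates every multiple of `log(1/δ)` as `δ → 0`. -/
def bar (ρ s : ℝ) : ℝ := barLog ρ s * Real.log (barLog ρ s)

/-- The derivative of `bar ρ` (see `hasDerivAt_bar`). -/
def bar' (ρ s : ℝ) : ℝ := (Real.log (barLog ρ s) + 1) / (ρ ^ 2 - s)

theorem hasDerivAt_barLog {ρ s : ℝ} (hs : s < ρ ^ 2) :
    HasDerivAt (barLog ρ) (1 / (ρ ^ 2 - s)) s := by
  have h := (((hasDerivAt_id s).const_sub (ρ ^ 2)).log
    (by simpa using (sub_pos.2 hs).ne')).const_sub (Real.log (2 * ρ))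
  refine h.congr_deriv ?_
  simp [neg_div]

theorem hasDerivAt_bar {ρ s : ℝ} (hs : s < ρ ^ 2) (hL : barLog ρ s ≠ 0) :
    HasDerivAt (bar ρ) (bar' ρ s) s := by
  have h := (hasDerivAt_barLog hs).mul ((hasDerivAt_barLog hs).log hL)
  refine h.congr_deriv ?_
  unfold bar'
  have : ρ ^ 2 - s ≠ 0 := (sub_pos.2 hs).ne'
  field_simp

theorem hasDerivAt_bar' {ρ s : ℝ} (hs : s < ρ ^ 2) (hL : barLog ρ s ≠ 0) :
    HasDerivAt (bar' ρ) ((1 / barLog ρ s + Real.log (barLog ρ s) + 1) / (ρ ^ 2 - s) ^ 2) s := by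
  have hq : ρ ^ 2 - s ≠ 0 := (sub_pos.2 hs).ne'
  have h := (((hasDerivAt_barLog hs).log hL).add_const 1).div
    ((hasDerivAt_id s).const_sub (ρ ^ 2)) (by simpa using hq)
  refine h.congr_deriv ?_
  simp only [id]
  field_simp
  ring

theorem barLog_ge {ρ r : ℝ} (hr0 : 0 ≤ r) (hr : r < ρ) :
    -Real.log (ρ - r) ≤ barLog ρ (r ^ 2) := by
  unfold barLog
  have e : ρ ^ 2 - r ^ 2 = (ρ - r) * (ρ + r) := by ring
  rw [e, Real.log_mul (x := ρ - r) (y := ρ + r) (by linarith) (by linarith)]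
  have : Real.log (ρ + r) ≤ Real.log (2 * ρ) := Real.log_le_log (by linarith) (by linarith)
  linarith

theorem bar_mono {ρ s t : ℝ} (hst : s ≤ t) (ht : t < ρ ^ 2) (h1 : 1 ≤ barLog ρ s) :
    bar ρ s ≤ bar ρ t := by
  have hL : barLog ρ s ≤ barLog ρ t := by
    unfold barLog
    have := Real.log_le_log (show 0 < ρ ^ 2 - t by linarith) (show ρ ^ 2 - t ≤ ρ ^ 2 - s by linarith)
    linarith
  unfold bar
  have h2 := Real.log_le_log (by linarith) hL
  have h3 := Real.log_nonneg h1
  exact mul_le_mul hL h2 h3 (by linarith)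

/-- The barrier is a supersolution of the linear equation: the Laplacian `4sF'' + 2NF'` of
`F = bar ρ` at `s = (ρ - d)²` is at most `γ(d)/d² · F`. This is where `β > 2` enters. -/
theorem bar_laplacian_le {N : ℕ} {β ρ d : ℝ} (hβ : 2 < β) (hd : 0 < d) (hdρ : d < ρ)
    (h1 : 1 ≤ -Real.log d) (h2 : 2 * N * d / ρ ≤ (β / 2 - 1) / 2)
    (h3 : 2 + (β / 2 - 1) / 2 ≤ (β / 2 - 1) / 2 * Real.log (-Real.log d)) :
    4 * (ρ - d) ^ 2 * ((1 / barLog ρ ((ρ - d) ^ 2) + Real.log (barLog ρ ((ρ - d) ^ 2)) + 1) /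
        (ρ ^ 2 - (ρ - d) ^ 2) ^ 2) + 2 * N * bar' ρ ((ρ - d) ^ 2)
      ≤ β / (-2 * Real.log d) / d ^ 2 * bar ρ ((ρ - d) ^ 2) := by
  have hL := barLog_ge (ρ := ρ) (r := ρ - d) (by linarith) (by linarith)
  rw [sub_sub_cancel] at hL
  unfold bar' bar
  set L := barLog ρ ((ρ - d) ^ 2)
  set ℓ := -Real.log d with hℓ
  set η := (β / 2 - 1) / 2 with hη
  have hη0 : 0 < η := by rw [hη]; linarith
  have hLL : Real.log ℓ ≤ Real.log L := Real.log_le_log (by linarith) hL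
  have h3' : 2 + η ≤ η * Real.log L := h3.trans (mul_le_mul_of_nonneg_left hLL hη0.le)
  have hL1 : 1 ≤ L := h1.trans hL
  have hlogL : 0 ≤ Real.log L := Real.log_nonneg hL1
  have hinv : 1 / L ≤ 1 := by rw [div_le_one (by linarith)]; exact hL1
  have hinv0 : 0 ≤ 1 / L := by positivity
  have hq : ρ ^ 2 - (ρ - d) ^ 2 = d * (2 * ρ - d) := by ring
  have hρ : 0 < ρ := hd.trans hdρ
  rw [hq]
  have hA : 4 * (ρ - d) ^ 2 / (d * (2 * ρ - d)) ^ 2 ≤ 1 / d ^ 2 := by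
    have : 0 < 2 * ρ - d := by linarith
    rw [div_le_div_iff₀ (by positivity) (by positivity)]
    have : (2 * (ρ - d)) ^ 2 ≤ (2 * ρ - d) ^ 2 := by
      apply pow_le_pow_left₀ <;> linarith
    nlinarith [mul_le_mul_of_nonneg_left this (sq_nonneg d)]
  have hB : 2 * N * ((Real.log L + 1) / (d * (2 * ρ - d))) ≤ η * (Real.log L + 1) / d ^ 2 := by
    have e : η * (Real.log L + 1) / d ^ 2 = (η / d) * ((Real.log L + 1) / d) := by
      field_simp
    have hstep : 2 * (N : ℝ) / (2 * ρ - d) ≤ η / d := by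
      calc 2 * (N : ℝ) / (2 * ρ - d) ≤ 2 * N / ρ := by gcongr; linarith
        _ = (2 * N * d / ρ) / d := by field_simp
        _ ≤ η / d := by gcongr
    rw [e]
    calc 2 * N * ((Real.log L + 1) / (d * (2 * ρ - d)))
        = 2 * (N : ℝ) / (2 * ρ - d) * ((Real.log L + 1) / d) := by
          have : 2 * ρ - d ≠ 0 := by linarith
          field_simp
      _ ≤ _ := by gcongr
  calc _ = 4 * (ρ - d) ^ 2 / (d * (2 * ρ - d)) ^ 2 * (1 / L + Real.log L + 1)
        + 2 * N * ((Real.log L + 1) / (d * (2 * ρ - d))) := by ring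
    _ ≤ 1 / d ^ 2 * (1 / L + Real.log L + 1) + η * (Real.log L + 1) / d ^ 2 := by
        gcongr
    _ = (1 / L + (Real.log L + 1) * (1 + η)) / d ^ 2 := by ring
    _ ≤ (β / 2 * Real.log L) / d ^ 2 := by
        gcongr
        have : β / 2 = 1 + 2 * η := by rw [hη]; ring
        rw [this]
        nlinarith
    _ ≤ (β / 2 * Real.log L) / d ^ 2 * (L / ℓ) := by
        apply le_mul_of_one_le_right
        · have : 0 ≤ β / 2 := by linarith
          positivity
        · rw [one_le_div (by linarith)]; exact hL
    _ = _ := by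
        have : -2 * Real.log d = 2 * ℓ := by rw [hℓ]; ring
        rw [this]
        have : ℓ ≠ 0 := by linarith
        field_simp

theorem gammaFun_nonneg {β s : ℝ} (hβ : 0 ≤ β) (hs : 0 < s) (hs1 : s ≤ 1) : 0 ≤ gammaFun β s := by
  unfold gammaFun
  refine mul_nonneg hβ (le_min (inv_nonneg.2 (Real.log_nonneg ?_)) zero_le_one)
  exact (one_le_inv₀ (by positivity)).2 (pow_le_one₀ hs.le hs1)

theorem gammaFun_eq {β s : ℝ} (h : 1 ≤ -Real.log s) :
    gammaFun β s = β / (-2 * Real.log s) := by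
  unfold gammaFun
  have e : Real.log (s ^ 2)⁻¹ = -2 * Real.log s := by
    rw [Real.log_inv, Real.log_pow]; push_cast; ring
  rw [e, min_eq_left, div_eq_mul_inv]
  exact inv_le_one_of_one_le₀ (by linarith)

/-! ### Keller–Osserman estimate and comparison -/

/-- Keller–Osserman bound: `e^u ≤ Δu` on a closed ball of radius `R` gives `e^{u(x)} ≤ 4N/R²` at its
centre. At a maximum of `(R² - |z - x|²)² e^u`, `u` is touched from above by
`-2 log(R² - |z - x|²)` up to a constant. -/
theorem exp_le_of_exp_le_lap {N : ℕ} (hN : 2 ≤ N) {u : Euc N → ℝ} {x : Euc N} {R : ℝ}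
    (hR : 0 < R) (hu : ∀ z ∈ Metric.closedBall x R, ContDiffAt ℝ 2 u z)
    (hlap : ∀ z ∈ Metric.closedBall x R, Real.exp (u z) ≤ lap u z) :
    Real.exp (u x) ≤ 4 * N / R ^ 2 := by
  have hN' : (2 : ℝ) ≤ N := by exact_mod_cast hN
  set h : Euc N → ℝ := fun z => (R ^ 2 - ‖z - x‖ ^ 2) ^ 2 * Real.exp (u z) with hh
  have hcont : ContinuousOn h (Metric.closedBall x R) := by
    refine ContinuousOn.mul (by fun_prop) (ContinuousOn.rexp ?_)
    exact fun z hz => (hu z hz).continuousAt.continuousWithinAt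
  obtain ⟨z₀, hz₀, hmax⟩ := (isCompact_closedBall x R).exists_isMaxOn
    ⟨x, Metric.mem_closedBall_self hR.le⟩ hcont
  have hx : h x ≤ h z₀ := hmax (Metric.mem_closedBall_self hR.le)
  have hxe : h x = R ^ 4 * Real.exp (u x) := by simp [hh]; ring
  have hzR : ‖z₀ - x‖ < R := by
    rw [Metric.mem_closedBall, dist_eq_norm] at hz₀
    refine lt_of_le_of_ne hz₀ fun heq => ?_
    have : h z₀ = 0 := by simp [hh, heq]
    rw [this, hxe] at hx
    have : 0 < R ^ 4 * Real.exp (u x) := by positivity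
    linarith
  set s := ‖z₀ - x‖ ^ 2 with hs
  have hq : ∀ z, ‖z - x‖ < R → 0 < R ^ 2 - ‖z - x‖ ^ 2 := fun z hz => by
    have := pow_lt_pow_left₀ hz (norm_nonneg _) two_ne_zero
    linarith
  have hq0 : 0 < R ^ 2 - s := hq z₀ hzR
  have hlogh : ∀ z, ‖z - x‖ < R →
      u z - (-2 * Real.log (R ^ 2 - ‖z - x‖ ^ 2)) = Real.log (h z) := fun z hz => by
    have := (hq z hz).ne'
    rw [hh, Real.log_mul (by positivity) (Real.exp_pos _).ne', Real.log_exp, Real.log_pow]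
    push_cast; ring
  have hloc : IsLocalMax (fun z => u z - (fun s => -2 * Real.log (R ^ 2 - s)) (‖z - x‖ ^ 2)) z₀ := by
    have hball : Metric.ball x R ∈ 𝓝 z₀ :=
      Metric.isOpen_ball.mem_nhds (by rwa [Metric.mem_ball, dist_eq_norm])
    filter_upwards [hball] with z hz
    have hz' : ‖z - x‖ < R := by rwa [Metric.mem_ball, dist_eq_norm] at hz
    rw [hlogh z hz', hlogh z₀ hzR]
    refine Real.log_le_log ?_ (hmax (Metric.ball_subset_closedBall hz))
    have := hq z hz'
    positivity
  have hF : ∀ s, s < R ^ 2 →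
      HasDerivAt (fun s => -2 * Real.log (R ^ 2 - s)) (2 / (R ^ 2 - s)) s := fun s hs => by
    have h := (((hasDerivAt_id' s).const_sub (R ^ 2)).log (sub_pos.2 hs).ne').const_mul (-2)
    exact h.congr_deriv (by ring)
  have hF' : HasDerivAt (fun s => 2 / (R ^ 2 - s)) (2 / (R ^ 2 - s) ^ 2) s := by
    have h := (hasDerivAt_const s (2 : ℝ)).div ((hasDerivAt_id' s).const_sub (R ^ 2)) hq0.ne'
    exact h.congr_deriv (by ring)
  have hev : ∀ᶠ s in 𝓝 s,
      HasDerivAt (fun s => -2 * Real.log (R ^ 2 - s)) (2 / (R ^ 2 - s)) s :=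
    (gt_mem_nhds (sub_pos.1 hq0)).mono hF
  have hle := (hlap z₀ hz₀).trans (lap_le_of_radial_touch (hu z₀ hz₀) hloc hev hF')
  rw [← hs] at hle
  have hs0 : 0 ≤ s := by positivity
  have h2 : 4 * s * (2 / (R ^ 2 - s) ^ 2) + 2 * N * (2 / (R ^ 2 - s))
      ≤ 4 * N * R ^ 2 / (R ^ 2 - s) ^ 2 := by
    have e : 4 * s * (2 / (R ^ 2 - s) ^ 2) + 2 * N * (2 / (R ^ 2 - s))
        = (8 * s + 4 * N * (R ^ 2 - s)) / (R ^ 2 - s) ^ 2 := by field_simp; ring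
    rw [e]
    gcongr
    nlinarith
  have h3 : h z₀ ≤ 4 * N * R ^ 2 := by
    have := hle.trans h2
    rw [le_div_iff₀ (by positivity)] at this
    simp only [hh]
    rw [← hs]; linarith
  rw [le_div_iff₀ (by positivity)]
  have h4 : R ^ 4 * Real.exp (u x) ≤ 4 * N * R ^ 2 := by rw [← hxe]; exact hx.trans h3
  have hR2 : 0 < R ^ 2 := by positivity
  nlinarith

theorem log_growth {ε : ℝ} (hε : 0 < ε) (c : ℝ) :
    ∀ᶠ d in 𝓝[>] (0 : ℝ), c + 2 * -Real.log d ≤ ε * (-Real.log d * Real.log (-Real.log d)) := by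
  have hlog : Tendsto (fun d : ℝ => -Real.log d) (𝓝[>] 0) atTop :=
    tendsto_neg_atBot_atTop.comp Real.tendsto_log_nhdsGT_zero
  have hloglog := (Real.tendsto_log_atTop.comp hlog).const_mul_atTop hε
  filter_upwards [hlog.eventually_ge_atTop c, hlog.eventually_ge_atTop 0,
    hloglog.eventually_ge_atTop 3] with d h1 h2 h3
  simp only [Function.comp] at h3
  nlinarith

theorem le_bar {ρ d : ℝ} (hd : 0 < d) (hdρ : d < ρ) (h1 : 1 ≤ -Real.log d) :
    -Real.log d * Real.log (-Real.log d) ≤ bar ρ ((ρ - d) ^ 2) := by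
  have hL := barLog_ge (ρ := ρ) (r := ρ - d) (by linarith) (by linarith)
  rw [sub_sub_cancel] at hL
  exact mul_le_mul hL (Real.log_le_log (by linarith) hL) (Real.log_nonneg h1) (by linarith)

theorem bar_nonneg {ρ d : ℝ} (hd : 0 < d) (hdρ : d < ρ) (h1 : 1 ≤ -Real.log d) :
    0 ≤ bar ρ ((ρ - d) ^ 2) :=
  (mul_nonneg (by linarith) (Real.log_nonneg h1)).trans (le_bar hd hdρ h1)

/-- Maximum principle for `u - ε bar(δ)`: near a local maximum `x`, replace `δ(z)` by the smaller
smooth function `ρ - |z - y|`, which agrees with it at `x`. Then `lap_le_of_radial_touch` and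
`bar_laplacian_le` give `Δu(x) ≤ (γ/δ²)u(x)`, contradicting the equation since `e^u > 0`. -/
theorem no_interior_max {N : ℕ} {Ω : Set (Euc N)} (hΩo : IsOpen Ω) (hne : Ωᶜ.Nonempty)
    {β ρ : ℝ} (hβ : 2 < β) (hreg : ContDiffOn ℝ 3 (bdist Ω) (bstrip Ω ρ))
    {u : Euc N → ℝ} (hu : IsGammaSolution β Ω u) {x : Euc N} (hx : x ∈ Ω) (hdρ : bdist Ω x < ρ)
    (hd : ∀ᶠ d in 𝓝 (bdist Ω x), 1 ≤ -Real.log d)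
    (h2 : 2 * N * bdist Ω x / ρ ≤ (β / 2 - 1) / 2)
    (h3 : 2 + (β / 2 - 1) / 2 ≤ (β / 2 - 1) / 2 * Real.log (-Real.log (bdist Ω x)))
    {ε : ℝ} (hε : 0 < ε) (hux : ε * bar ρ ((ρ - bdist Ω x) ^ 2) ≤ u x)
    (hmax : IsLocalMax (fun z => u z - ε * bar ρ ((ρ - bdist Ω z) ^ 2)) x) : False := by
  obtain ⟨hu2, hpde⟩ := hu
  have hpos := bdist_pos hΩo hne hx
  have h1 := hd.self_of_nhds
  obtain ⟨y, hxy, hy⟩ := exists_interior_ball hΩo hne hreg hx hdρ.le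
  have hpde := hpde x hx
  rw [gammaFun_eq h1] at hpde
  have hlapbar := bar_laplacian_le (N := N) hβ hpos hdρ h1 h2 h3
  set d := bdist Ω x with hdd
  have hs : ‖x - y‖ ^ 2 = (ρ - d) ^ 2 := by rw [hxy]
  have hsρ : (ρ - d) ^ 2 < ρ ^ 2 := by nlinarith
  have hLge : ∀ z, 0 < bdist Ω z → bdist Ω z ≤ ρ → 1 ≤ -Real.log (bdist Ω z) →
      1 ≤ barLog ρ ((ρ - bdist Ω z) ^ 2) := fun z hz hzρ hz1 => by
    have := barLog_ge (ρ := ρ) (r := ρ - bdist Ω z) (by linarith) (by linarith)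
    rw [sub_sub_cancel] at this
    exact hz1.trans this
  have hL1 := hLge x hpos hdρ.le h1
  have hbc : Tendsto (bdist Ω) (𝓝 x) (𝓝 d) := (bdist_continuous Ω).tendsto x
  have hnc : Tendsto (fun z => ‖z - y‖) (𝓝 x) (𝓝 (ρ - d)) := by
    rw [← hxy]
    have : Continuous fun z => ‖z - y‖ := by fun_prop
    exact this.tendsto x
  have hloc : IsLocalMax (fun z => u z - (fun s => ε * bar ρ s) (‖z - y‖ ^ 2)) x := by
    filter_upwards [hmax, hbc.eventually hd, hbc.eventually (gt_mem_nhds hdρ),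
      hbc.eventually (lt_mem_nhds hpos),
      hnc.eventually (gt_mem_nhds (show ρ - d < ρ by linarith))] with z hz hz1 hzρ hz0 hzy
    have hge := bdist_le_add Ω y z
    rw [norm_sub_rev] at hge
    have hmono : bar ρ ((ρ - bdist Ω z) ^ 2) ≤ bar ρ (‖z - y‖ ^ 2) := by
      refine bar_mono ?_ ?_ (hLge z hz0 hzρ.le hz1)
      · apply pow_le_pow_left₀ <;> linarith
      · exact pow_lt_pow_left₀ hzy (norm_nonneg _) two_ne_zero
    have := mul_le_mul_of_nonneg_left hmono hε.le
    rw [hs]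
    linarith
  have hLev : ∀ᶠ s in 𝓝 ((ρ - d) ^ 2), barLog ρ s ≠ 0 :=
    (hasDerivAt_barLog hsρ).continuousAt.eventually_ne (by linarith)
  have hF : ∀ᶠ s in 𝓝 (‖x - y‖ ^ 2), HasDerivAt (fun s => ε * bar ρ s) (ε * bar' ρ s) s := by
    rw [hs]
    filter_upwards [hLev, gt_mem_nhds hsρ] with s hs1 hs2
    exact (hasDerivAt_bar hs2 hs1).const_mul ε
  have hF' : HasDerivAt (fun s => ε * bar' ρ s) _ (‖x - y‖ ^ 2) :=
    hs ▸ (hasDerivAt_bar' hsρ (by linarith)).const_mul ε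
  have hlap := lap_le_of_radial_touch (hu2.contDiffAt (hΩo.mem_nhds hx)) hloc hF hF'
  rw [hs] at hlap
  have hV : 0 ≤ β / (-2 * Real.log d) / d ^ 2 := by
    refine div_nonneg (div_nonneg ?_ ?_) (sq_nonneg _) <;> linarith
  have e1 := mul_le_mul_of_nonneg_left hlapbar hε.le
  have e2 := mul_le_mul_of_nonneg_left hux hV
  have e3 := Real.exp_pos (u x)
  have e4 : lap u x ≤ β / (-2 * Real.log d) / d ^ 2 * u x := by
    refine le_trans ?_ e2
    refine le_trans hlap ?_
    refine le_trans (le_of_eq ?_) (e1.trans (le_of_eq ?_)) <;> ring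
  linarith

theorem no_large_solution_gamma_of_beta_gt_two {N : ℕ} (hN : 2 ≤ N)
    (Ω : Set (Euc N)) (hΩo : IsOpen Ω) (hΩne : Ω.Nonempty)
    (hΩb : Bornology.IsBounded Ω) (hΩreg : BoundaryC3 Ω)
    {β : ℝ} (hβ : 2 < β) :
    ¬ ∃ u : Euc N → ℝ, IsGammaSolution β Ω u ∧ IsLarge Ω u := by
  rintro ⟨u, hsol, hlarge⟩
  obtain ⟨ρ, hρ, hreg⟩ := hΩreg
  have hne := compl_nonempty_of_bounded hN hΩb
  have hu2 : ∀ z ∈ Ω, ContDiffAt ℝ 2 u z := fun z hz => hsol.1.contDiffAt (hΩo.mem_nhds hz)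
  have hδ := bdist_continuous Ω
  obtain ⟨d₀, hd₀, hd₀ρ, hd₀h, hthr⟩ := exists_barrier_threshold (N := N) hβ hρ
  obtain ⟨e₀, he₀, hu0⟩ := hlarge 0
  have hKO : ∀ x ∈ Ω, bdist Ω x < min (1 / 2) (e₀ / 2) →
      u x ≤ Real.log (16 * N) + 2 * -Real.log (bdist Ω x) := by
    intro x hx hxd
    have hpos := bdist_pos hΩo hne hx
    set d := bdist Ω x with hdd
    have hd1 := hxd.trans_le (min_le_left _ _)
    have hd2 := hxd.trans_le (min_le_right _ _)
    have hball : ∀ z ∈ Metric.closedBall x (d / 2), z ∈ Ω ∧ bdist Ω z ≤ 3 * d / 2 := by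
      intro z hz
      rw [Metric.mem_closedBall, dist_eq_norm] at hz
      have a1 := bdist_le_add Ω z x
      have a2 := bdist_le_add Ω x z
      rw [norm_sub_rev] at a2
      exact ⟨mem_of_bdist_pos (by linarith), by linarith⟩
    have hexp := exp_le_of_exp_le_lap hN (half_pos hpos) (fun z hz => hu2 z (hball z hz).1)
      (fun z hz => by
        obtain ⟨hzΩ, hzd⟩ := hball z hz
        have hzpos := bdist_pos hΩo hne hzΩ
        have p := hsol.2 z hzΩ
        have g := gammaFun_nonneg (β := β) (by linarith) hzpos (by linarith)
        have v : 0 ≤ gammaFun β (bdist Ω z) / bdist Ω z ^ 2 * u z :=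
          mul_nonneg (by positivity) (hu0 z hzΩ (by linarith))
        linarith)
    have hNpos : (0 : ℝ) < N := by exact_mod_cast (by omega : 0 < N)
    have := (Real.le_log_iff_exp_le (by positivity)).2 hexp
    have e : 4 * (N : ℝ) / (d / 2) ^ 2 = 16 * N / d ^ 2 := by field_simp; norm_num
    rw [e, Real.log_div (by positivity) (by positivity), Real.log_pow] at this
    push_cast at this
    linarith
  -- `K` bounds `u` away from the boundary; the barrier argument propagates it to all of `Ω`.
  have hclosed : IsClosed {z | d₀ ≤ bdist Ω z} := isClosed_le continuous_const hδ
  have hsub : ∀ c > 0, {z | c ≤ bdist Ω z} ⊆ Ω := fun c hc z hz =>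
    mem_of_bdist_pos (lt_of_lt_of_le hc hz)
  have hcpt : IsCompact {z | d₀ ≤ bdist Ω z} :=
    Metric.isCompact_of_isClosed_isBounded hclosed (hΩb.subset (hsub d₀ hd₀))
  obtain ⟨K₀, hK₀⟩ := hcpt.bddAbove_image (hsol.1.continuousOn.mono (hsub d₀ hd₀))
  set K := max K₀ 0 with hK
  have hKu : ∀ z, d₀ ≤ bdist Ω z → u z ≤ K := fun z hz =>
    (hK₀ (mem_image_of_mem u hz)).trans (le_max_left _ _)
  have hK0 : 0 ≤ K := le_max_right _ _
  have hbnd : ∀ ε > 0, ∀ x ∈ Ω, bdist Ω x < d₀ →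
      u x ≤ K + ε * bar ρ ((ρ - bdist Ω x) ^ 2) := by
    intro ε hε x hx hxd
    by_contra! hcon
    obtain ⟨b, hb, hgrow⟩ := mem_nhdsGT_iff_exists_Ioc_subset.1
      (log_growth hε (Real.log (16 * N)))
    have hb : 0 < b := hb
    have hpos := bdist_pos hΩo hne hx
    have hm : 0 < min b (min (1 / 2) (e₀ / 2)) := by positivity
    obtain ⟨d₁, hd₁0, hd₁⟩ := exists_between (lt_min hpos hm)
    have hd₁x := hd₁.trans_le (min_le_left _ _)
    have hd₁m := hd₁.trans_le (min_le_right _ _)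
    have hd₁b := hd₁m.trans_le (min_le_left _ _)
    have hd₁k := hd₁m.trans_le (min_le_right _ _)
    set w : Euc N → ℝ := fun z => u z - ε * bar ρ ((ρ - bdist Ω z) ^ 2) with hw
    set S := {z | d₁ ≤ bdist Ω z} ∩ {z | bdist Ω z ≤ d₀} with hS
    have hSΩ : S ⊆ Ω := inter_subset_left.trans (hsub d₁ hd₁0)
    have hScpt : IsCompact S := by
      refine Metric.isCompact_of_isClosed_isBounded ?_ (hΩb.subset hSΩ)
      exact (isClosed_le continuous_const hδ).inter (isClosed_le hδ continuous_const)
    have hwc : ContinuousOn w S := by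
      refine (hsol.1.continuousOn.mono hSΩ).sub (continuousOn_const.mul ?_)
      intro z hz
      have hz0 : 0 < bdist Ω z := lt_of_lt_of_le hd₁0 hz.1
      have hzd : bdist Ω z ≤ d₀ := hz.2
      have hL := barLog_ge (ρ := ρ) (r := ρ - bdist Ω z) (by linarith) (by linarith)
      rw [sub_sub_cancel] at hL
      have h1 := (hthr _ hz0 hzd).1
      have hbar := (hasDerivAt_bar (ρ := ρ) (s := (ρ - bdist Ω z) ^ 2) (by nlinarith)
        (by linarith)).continuousAt
      have hin : Continuous fun z => (ρ - bdist Ω z) ^ 2 := by fun_prop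
      exact (ContinuousAt.comp (f := fun z => (ρ - bdist Ω z) ^ 2) hbar
        hin.continuousAt).continuousWithinAt
    obtain ⟨x₀, hx₀, hmax⟩ := hScpt.exists_isMaxOn ⟨x, hd₁x.le, hxd.le⟩ hwc
    have hx₀Ω := hSΩ hx₀
    have hx₀0 := bdist_pos hΩo hne hx₀Ω
    have hx₀d : bdist Ω x₀ ≤ d₀ := hx₀.2
    have hx₀1 : d₁ ≤ bdist Ω x₀ := hx₀.1
    obtain ⟨t1, t2, t3⟩ := hthr _ hx₀0 hx₀d
    have hbar0 := bar_nonneg hx₀0 (hx₀d.trans_lt hd₀ρ) t1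
    have hwK : K < w x₀ := by
      have : w x ≤ w x₀ := hmax ⟨hd₁x.le, hxd.le⟩
      simp only [hw] at this ⊢
      linarith
    have hεb : 0 ≤ ε * bar ρ ((ρ - bdist Ω x₀) ^ 2) := by positivity
    simp only [hw] at hwK
    have hlt0 : bdist Ω x₀ < d₀ := by
      refine lt_of_le_of_ne hx₀d fun heq => ?_
      have := hKu x₀ heq.ge
      linarith
    -- On the inner level `δ = d₁` the barrier exceeds the Keller–Osserman bound.
    have hlt1 : d₁ < bdist Ω x₀ := by
      refine lt_of_le_of_ne hx₀1 fun heq => ?_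
      have a1 := hKO x₀ hx₀Ω (by rw [← heq]; exact hd₁k)
      have a2 : Real.log (16 * N) + 2 * -Real.log (bdist Ω x₀)
          ≤ ε * (-Real.log (bdist Ω x₀) * Real.log (-Real.log (bdist Ω x₀))) :=
        hgrow (show bdist Ω x₀ ∈ Ioc 0 b from ⟨hx₀0, by rw [← heq]; exact hd₁b.le⟩)
      have a3 := mul_le_mul_of_nonneg_left (le_bar hx₀0 (hx₀d.trans_lt hd₀ρ) t1) hε.le
      linarith
    have hnhds : S ∈ 𝓝 x₀ :=
      inter_mem (hδ.continuousAt.eventually (le_mem_nhds hlt1))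
        (hδ.continuousAt.eventually (ge_mem_nhds hlt0))
    refine no_interior_max hΩo hne hβ hreg hsol hx₀Ω (hx₀d.trans_lt hd₀ρ) ?_ t2 t3 hε
      (by linarith) (hmax.isLocalMax hnhds)
    filter_upwards [Ioo_mem_nhds hx₀0 hlt0] with d hd
    exact (hthr d hd.1 hd.2.le).1
  have hbound : ∀ x ∈ Ω, u x ≤ K := by
    intro x hx
    rcases le_or_gt d₀ (bdist Ω x) with h | h
    · exact hKu x h
    · have hlim : Tendsto (fun ε : ℝ => K + ε * bar ρ ((ρ - bdist Ω x) ^ 2)) (𝓝[>] 0) (𝓝 K) := by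
        have hc : Continuous fun ε : ℝ => K + ε * bar ρ ((ρ - bdist Ω x) ^ 2) := by fun_prop
        have := hc.tendsto 0
        rw [zero_mul, add_zero] at this
        exact this.mono_left nhdsWithin_le_nhds
      exact ge_of_tendsto hlim (by
        filter_upwards [self_mem_nhdsWithin] with ε hε using hbnd ε hε x hx h)
  obtain ⟨e₁, he₁, hu1⟩ := hlarge (K + 1)
  obtain ⟨x, hx, hxe⟩ := exists_small_bdist hΩo hne hΩne he₁
  linarith [hbound x hx, hu1 x hx hxe]
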